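/- For every finite multigraph G and every partition σ of its vertex set, 𝔣(G^σ) ≤ 𝔣(G), where G^σ is the quotient multigraph obtained by identifying the vertices lying in a common block of σ (keeping all edges). -/

import Mathlib

open MeasureTheory ProbabilityTheory Filter Matrix Asymptotics
open scoped BigOperators ENNReal
open scoped Classical

noncomputable section

/-- The diagonal projection `Δ` on `N × N` complex matrices. -/
def dproj {N : ℕ} (A : Matrix (Fin N) (Fin N) ℂ) : Matrix (Fin N) (Fin N) ℂ :=
  Matrix.of fun i j => if i = j then A i j else 0

/-- The operator norm of a matrix acting on `ℓ²({1,…,N})`. -/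
def matOpNorm {N : ℕ} (A : Matrix (Fin N) (Fin N) ℂ) : ℝ :=
  ‖Matrix.toEuclideanCLM (𝕜 := ℂ) A‖

/-! ### Multigraph combinatorics -/

section Graph

variable {V E : Type} (src tgt : E → V)

/-- Adjacency through an edge avoiding a forbidden set `F` of edges
(direction is ignored). -/
def adjOn (F : Set E) (a b : V) : Prop :=
  ∃ e, e ∉ F ∧ ((src e = a ∧ tgt e = b) ∨ (src e = b ∧ tgt e = a))

/-- Reachability in the graph, using only edges outside `F`. -/
def reachOn (F : Set E) : V → V → Prop :=
  Relation.ReflTransGen (adjOn src tgt F)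

lemma adjOn_symm (F : Set E) : Symmetric (adjOn src tgt F) := by
  rintro a b ⟨e, he, h⟩
  exact ⟨e, he, h.symm⟩

/-- The setoid of connectivity using edges outside `F`. -/
def connSetoid (F : Set E) : Setoid V :=
  ⟨reachOn src tgt F,
    ⟨fun _ => Relation.ReflTransGen.refl,
     fun h =>
       haveI : Std.Symm (adjOn src tgt F) := ⟨fun _ _ hab => adjOn_symm src tgt F hab⟩
       Relation.ReflTransGen.symmetric.symm _ _ h,
     fun h h' => Relation.ReflTransGen.trans h h'⟩⟩

/-- Number of connected components of the graph with the edges in `F` deleted. -/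
def ncompAvoiding (F : Set E) : ℕ :=
  Nat.card (Quotient (connSetoid src tgt F))

/-- Number of connected components. -/
def ncomp : ℕ := ncompAvoiding src tgt ∅

/-- The graph is connected. -/
def IsConnectedGraph : Prop := ∀ a b : V, reachOn src tgt ∅ a b

/-- A cut edge (bridge): deleting it disconnects its endpoints. -/
def IsCutEdge (e : E) : Prop := ¬ reachOn src tgt {e} (src e) (tgt e)

/-- The set of cut edges. -/
def cutEdges : Set E := {e | IsCutEdge src tgt e}

/-- The setoid whose classes are the two-edge connected components
(connected components after deleting all cut edges). -/
def teccSetoid : Setoid V := connSetoid src tgt (cutEdges src tgt)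

/-- Degree, in the forest of two-edge connected components, of a
two-edge connected component: the number of cut edges incident to it. -/
def teccDeg (c : Quotient (teccSetoid src tgt)) : ℕ :=
  Nat.card {e : E // IsCutEdge src tgt e ∧
    (Quotient.mk (teccSetoid src tgt) (src e) = c ∨
      Quotient.mk (teccSetoid src tgt) (tgt e) = c)}

/-- `𝔣(G)`: the number of leaves of the forest of two-edge connected components,
single-vertex trees of the forest counting twice. -/
def frak : ℕ :=
  Nat.card {c : Quotient (teccSetoid src tgt) // teccDeg src tgt c = 1} +
    2 * Nat.card {c : Quotient (teccSetoid src tgt) // teccDeg src tgt c = 0}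

end Graph

/-! ### Graph monomials -/

/-- A graph monomial: a finite directed multigraph with two roots and edges
labelled by a family index in `Fin L` and an index in `K`.  (Connectedness is
required separately via `IsConnectedGraph`.) -/
structure GraphMonomial (L : ℕ) (K : Type) where
  V : Type
  E : Type
  fintV : Fintype V
  fintE : Fintype E
  src : E → V
  tgt : E → V
  vin : V
  vout : V
  labL : E → Fin L
  labK : E → K

attribute [instance] GraphMonomial.fintV GraphMonomial.fintE

namespace GraphMonomial

variable {L : ℕ} {K : Type} (g : GraphMonomial L K)

/-- Evaluation of a graph monomial in a collection of matrices. -/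
def eval {N : ℕ} (A : Fin L → K → Matrix (Fin N) (Fin N) ℂ) :
    Matrix (Fin N) (Fin N) ℂ :=
  Matrix.of fun i j => ∑ φ : g.V → Fin N,
    if φ g.vin = j ∧ φ g.vout = i then
      ∏ e : g.E, A (g.labL e) (g.labK e) (φ (g.tgt e)) (φ (g.src e))
    else 0

/-- The starting vertex of a step `(e, b)`: `e` traversed forward if `b = true`,
backward otherwise. -/
def stepSrc (s : g.E × Bool) : g.V := if s.2 then g.src s.1 else g.tgt s.1

/-- The ending vertex of a step. -/
def stepTgt (s : g.E × Bool) : g.V := if s.2 then g.tgt s.1 else g.src s.1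

/-- A simple cycle of the underlying undirected multigraph: a nonempty cyclic
sequence of steps with pairwise distinct edges and pairwise distinct vertices. -/
def IsSimpleCycle (c : List (g.E × Bool)) : Prop :=
  ∃ h : c ≠ [],
    (∀ i : Fin c.length,
      g.stepTgt (c.get i) =
        g.stepSrc (c.get ⟨((i : ℕ) + 1) % c.length,
          Nat.mod_lt _ (List.length_pos_iff.mpr h)⟩)) ∧
    (c.map Prod.fst).Nodup ∧ (c.map g.stepSrc).Nodup

/-- A cycle is directed when it traverses all its edges consistently with
their orientations (one way or the other). -/
def IsDirectedCycleList (c : List (g.E × Bool)) : Prop :=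
  (∀ s ∈ c, s.2 = true) ∨ (∀ s ∈ c, s.2 = false)

/-- `S` is the edge set of some simple cycle. -/
def IsCycleEdgeSet (S : Finset g.E) : Prop :=
  ∃ c, g.IsSimpleCycle c ∧ (c.map Prod.fst).toFinset = S

/-- The underlying graph is an oriented cactus: it is connected, every simple
cycle is directed, and every edge belongs to exactly one simple cycle. -/
def IsOrientedCactus : Prop :=
  IsConnectedGraph g.src g.tgt ∧
  (∀ c, g.IsSimpleCycle c → g.IsDirectedCycleList c) ∧
  (∀ e : g.E, ∃! S : Finset g.E, g.IsCycleEdgeSet S ∧ e ∈ S)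

/-- A cactus-type monomial: an oriented cactus whose input and output coincide. -/
def IsCactusType : Prop := g.vin = g.vout ∧ g.IsOrientedCactus

/-- A member of `ℱ`: a directed simple path (oriented from the input, at the far
right, to the output, at the far left) with oriented cacti attached to the
vertices of the path (the root of each cactus being a path vertex). -/
def IsPathCactusType : Prop :=
  IsConnectedGraph g.src g.tgt ∧
  ∃ (d : ℕ) (v : Fin (d + 1) → g.V) (f : Fin d → g.E),
    Function.Injective v ∧ Function.Injective f ∧
    (∀ j : Fin d, g.src (f j) = v j.succ ∧ g.tgt (f j) = v j.castSucc) ∧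
    g.vin = v (Fin.last d) ∧ g.vout = v 0 ∧
    (∀ c, g.IsSimpleCycle c → g.IsDirectedCycleList c ∧ ∀ s ∈ c, s.1 ∉ Set.range f) ∧
    (∀ e : g.E, e ∉ Set.range f →
      ∃! S : Finset g.E, g.IsCycleEdgeSet S ∧ e ∈ S) ∧
    (∀ w : g.V, ∃! j : Fin (d + 1), reachOn g.src g.tgt (Set.range f) w (v j))

end GraphMonomial

lemma reachOn_map {V V' E : Type} {src tgt : E → V} (p : V → V') {F F' : Set E} (hF : F' ⊆ F)
    {a b : V} (h : reachOn src tgt F a b) :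
    reachOn (fun e => p (src e)) (fun e => p (tgt e)) F' (p a) (p b) := by
  refine Relation.ReflTransGen.lift p ?_ _ _ h
  rintro x y ⟨e, he, hxy⟩
  refine ⟨e, fun h' => he (hF h'), ?_⟩
  rcases hxy with ⟨rfl, rfl⟩ | ⟨rfl, rfl⟩
  · exact Or.inl ⟨rfl, rfl⟩
  · exact Or.inr ⟨rfl, rfl⟩

lemma reachOn_comm {V E : Type} {src tgt : E → V} {F : Set E} {a b : V} :
    reachOn src tgt F a b ↔ reachOn src tgt F b a :=
  ⟨(connSetoid src tgt F).symm', (connSetoid src tgt F).symm'⟩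

lemma reachOn_edge {V E : Type} {src tgt : E → V} {F : Set E} {e : E} (he : e ∉ F) :
    reachOn src tgt F (src e) (tgt e) :=
  Relation.ReflTransGen.single ⟨e, he, Or.inl ⟨rfl, rfl⟩⟩

/-- A cut edge of the image of a graph is a cut edge of the graph. -/
lemma IsCutEdge.of_map {V V' E : Type} {src tgt : E → V} (p : V → V') {e : E}
    (h : IsCutEdge (fun e => p (src e)) (fun e => p (tgt e)) e) : IsCutEdge src tgt e :=
  fun h' => h (reachOn_map p subset_rfl h')

lemma reachOn_of_tecc {V E : Type} {src tgt : E → V} {e : E} (he : IsCutEdge src tgt e)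
    {a b : V} (h : reachOn src tgt (cutEdges src tgt) a b) : reachOn src tgt {e} a b :=
  reachOn_map id (Set.singleton_subset_iff.mpr he) h

lemma tecc_src_ne_tgt {V E : Type} {src tgt : E → V} {e : E} (he : IsCutEdge src tgt e) :
    Quotient.mk (teccSetoid src tgt) (src e) ≠ Quotient.mk (teccSetoid src tgt) (tgt e) :=
  fun h => he (reachOn_of_tecc he (Quotient.exact h))

/-- The side of the cut edge `e` containing its source, as a set of two-edge connected
components. -/
def cutSide {V E : Type} (src tgt : E → V) (e : {e : E // IsCutEdge src tgt e}) :
    Quotient (teccSetoid src tgt) → Prop :=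
  Quotient.lift (fun v => reachOn src tgt {e.1} (src e) v) fun _ _ h =>
    propext ⟨fun h' => h'.trans (reachOn_of_tecc e.2 h),
      fun h' => h'.trans (reachOn_comm.mp (reachOn_of_tecc e.2 h))⟩

/-- A nonempty set of two-edge connected components spans fewer cut edges than it has
elements. -/
lemma card_inner_cutEdges_lt {V E : Type} [Fintype V] [Fintype E] (src tgt : E → V)
    (S : Finset (Quotient (teccSetoid src tgt))) (hS : S.Nonempty)
    (B : Finset {e : E // IsCutEdge src tgt e})
    (hB : ∀ e ∈ B, Quotient.mk (teccSetoid src tgt) (src e) ∈ S ∧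
      Quotient.mk (teccSetoid src tgt) (tgt e) ∈ S) :
    B.card + 1 ≤ S.card := by
  let f : Option B → S → ℚ := fun o c =>
    o.elim 1 fun e => if cutSide src tgt e.1 c.1 then 1 else 0
  have hf : LinearIndependent ℚ f := by
    rw [Fintype.linearIndependent_iff]
    intro g hg
    have hval (c : S) : g none + ∑ e : B, g (some e) *
        (if cutSide src tgt e.1 c.1 then 1 else 0) = 0 := by
      have := congrFun hg c
      simpa [Fintype.sum_option, f] using this
    have hsome (e : B) : g (some e) = 0 := by
      have h1 := (hval ⟨_, (hB e.1 e.2).1⟩).trans (hval ⟨_, (hB e.1 e.2).2⟩).symm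
      rw [add_right_inj, ← sub_eq_zero, ← Finset.sum_sub_distrib,
        Finset.sum_eq_single e] at h1
      · have hs : cutSide src tgt e.1 (Quotient.mk _ (src e.1)) := Relation.ReflTransGen.refl
        have ht : ¬ cutSide src tgt e.1 (Quotient.mk _ (tgt e.1)) := e.1.2
        simpa [hs, ht] using h1
      · intro e' _ hne
        have hst : cutSide src tgt e'.1 (Quotient.mk _ (src e.1)) ↔
            cutSide src tgt e'.1 (Quotient.mk _ (tgt e.1)) := by
          have he : e.1.1 ∉ ({e'.1.1} : Set E) := fun h =>
            hne (Subtype.ext (Subtype.ext (Set.mem_singleton_iff.mp h).symm))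
          exact ⟨fun h => Relation.ReflTransGen.trans h (reachOn_edge he),
            fun h => Relation.ReflTransGen.trans h (reachOn_comm.mp (reachOn_edge he))⟩
        simp [hst]
      · simp
    rintro (_ | e)
    · obtain ⟨c, hc⟩ := hS
      simpa [hsome] using hval ⟨c, hc⟩
    · exact hsome e
  simpa using hf.fintype_card_le_finrank

lemma teccDeg_eq_sum {V E : Type} [Fintype E] (src tgt : E → V)
    (c : Quotient (teccSetoid src tgt)) :
    teccDeg src tgt c = ∑ e : {e : E // IsCutEdge src tgt e},
      ((if Quotient.mk (teccSetoid src tgt) (src e) = c then 1 else 0) +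
        (if Quotient.mk (teccSetoid src tgt) (tgt e) = c then 1 else 0)) := by
  rw [teccDeg, ← Nat.card_congr (Equiv.subtypeSubtypeEquivSubtypeInter _ _),
    Nat.card_eq_fintype_card, Fintype.card_subtype, Finset.card_filter]
  refine Finset.sum_congr rfl fun e _ => ?_
  have := tecc_src_ne_tgt e.2
  grind

lemma frak_eq_sum {V E : Type} [Fintype V] (src tgt : E → V) :
    frak src tgt = ∑ c, (2 - teccDeg src tgt c) := by
  rw [frak, Nat.card_eq_fintype_card, Nat.card_eq_fintype_card, Fintype.card_subtype,
    Fintype.card_subtype, Finset.card_filter, Finset.card_filter, Finset.mul_sum,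
    ← Finset.sum_add_distrib]
  refine Finset.sum_congr rfl fun c _ => ?_
  split_ifs <;> omega

/-- The map induced on two-edge connected components by a map of vertices. -/
def teccMap {V V' E : Type} (src tgt : E → V) (p : V → V') :
    Quotient (teccSetoid src tgt) →
      Quotient (teccSetoid (fun e => p (src e)) (fun e => p (tgt e))) :=
  Quotient.map p fun _ _ h => reachOn_map p (fun _ he => IsCutEdge.of_map p he) h

lemma isCutEdge_map_of_tecc_ne {V V' E : Type} {src tgt : E → V} (p : V → V') {e : E}
    (h : teccMap src tgt p (Quotient.mk _ (src e)) ≠ teccMap src tgt p (Quotient.mk _ (tgt e))) :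
    IsCutEdge (fun e => p (src e)) (fun e => p (tgt e)) e := by
  by_contra he
  exact h (Quotient.sound (reachOn_edge (F := cutEdges _ _) he))

/-- The degrees in a fibre of `teccMap` count inner cut edges twice and boundary edges once. -/
lemma sum_teccDeg_fiber_le {V V' E : Type} [Fintype V] [Fintype E]
    (src tgt : E → V) (p : V → V')
    (d : Quotient (teccSetoid (fun e => p (src e)) (fun e => p (tgt e)))) :
    ∑ c with teccMap src tgt p c = d, teccDeg src tgt c ≤
      2 * Finset.card {e : {e : E // IsCutEdge src tgt e} |
        teccMap src tgt p (Quotient.mk _ (src e)) = d ∧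
          teccMap src tgt p (Quotient.mk _ (tgt e)) = d} +
      teccDeg (fun e => p (src e)) (fun e => p (tgt e)) d := by
  have hdeg : teccDeg (fun e => p (src e)) (fun e => p (tgt e)) d =
      Finset.card {e : {e : E // IsCutEdge src tgt e} |
        IsCutEdge (fun e => p (src e)) (fun e => p (tgt e)) e.1 ∧
        (teccMap src tgt p (Quotient.mk _ (src e)) = d ∨
          teccMap src tgt p (Quotient.mk _ (tgt e)) = d)} := by
    rw [← Fintype.card_subtype, ← Nat.card_eq_fintype_card, teccDeg]
    exact (Nat.card_congr (Equiv.subtypeSubtypeEquivSubtype fun h => h.1.of_map p)).symm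
  simp_rw [hdeg, teccDeg_eq_sum]
  rw [Finset.sum_comm, Finset.card_filter, Finset.card_filter, Finset.mul_sum,
    ← Finset.sum_add_distrib]
  refine Finset.sum_le_sum fun e _ => ?_
  rw [Finset.sum_add_distrib, Finset.sum_ite_eq, Finset.sum_ite_eq]
  have := @isCutEdge_map_of_tecc_ne _ _ _ src tgt p e.1
  simp only [Finset.mem_filter, Finset.mem_univ, true_and]
  grind

/-- Identifying vertices does not increase `frak`. -/
lemma frak_map_le {V V' E : Type} [Fintype V] [Fintype V'] [Fintype E]
    (src tgt : E → V) {p : V → V'} (hp : Function.Surjective p) :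
    frak (fun e => p (src e)) (fun e => p (tgt e)) ≤ frak src tgt := by
  rw [frak_eq_sum, frak_eq_sum, ← Finset.sum_fiberwise _ (teccMap src tgt p)]
  refine Finset.sum_le_sum fun d _ => ?_
  have hne : (Finset.univ.filter fun c => teccMap src tgt p c = d).Nonempty := by
    obtain ⟨v', rfl⟩ := Quotient.exists_rep d
    obtain ⟨v, rfl⟩ := hp v'
    exact ⟨Quotient.mk _ v, Finset.mem_filter.mpr ⟨Finset.mem_univ _, rfl⟩⟩
  have hdeg := sum_teccDeg_fiber_le src tgt p d
  have hcard := card_inner_cutEdges_lt src tgt _ hne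
    {e : {e : E // IsCutEdge src tgt e} |
        teccMap src tgt p (Quotient.mk _ (src e)) = d ∧
          teccMap src tgt p (Quotient.mk _ (tgt e)) = d} (by simp)
  have hsum : (Finset.univ.filter fun c => teccMap src tgt p c = d).card * 2 ≤
      ∑ c with teccMap src tgt p c = d, (2 - teccDeg src tgt c) +
        ∑ c with teccMap src tgt p c = d, teccDeg src tgt c := by
    rw [← Finset.sum_add_distrib]
    rw [← smul_eq_mul]
    refine Finset.card_nsmul_le_sum _ _ _ fun c _ => ?_
    omega
  omega

/-- For every finite multigraph `G` and every partition `σ` of its vertex set,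
`𝔣(G^σ) ≤ 𝔣(G)`, where `G^σ` is the quotient multigraph. -/
theorem frak_quotient_le
    {V E : Type} [Fintype V] [Fintype E] (src tgt : E → V) (σ : Setoid V) :
    frak (fun e => Quotient.mk σ (src e)) (fun e => Quotient.mk σ (tgt e)) ≤
      frak src tgt :=
  frak_map_le src tgt Quotient.mk_surjective
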